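/- Let 0 < a ≤ b and x ∈ ℝ. There exists a constant C > 0, depending only on a, b, x, such that for all real numbers t < T with T − t ≤ 1, all log-strikes k with |x − k| ≤ b²(T−t)/2, all λ in (max(e^x − e^k, 0), e^x) with BS^{−1}(t,T,x,k,λ) ∈ [a,b], and each n ∈ {4,5,6}, the n-th derivative of the inverse Black–Scholes map with respect to the price argument satisfies |(BS^{−1})^{(n)}(t,T,x,k,λ)| ≤ C (T−t)^{−(n−2)/2}. -/

import Mathlib

noncomputable section

/-- Standard normal density. -/
def phi (z : ℝ) : ℝ := (Real.sqrt (2 * Real.pi))⁻¹ * Real.exp (-z ^ 2 / 2)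

/-- Standard normal cumulative distribution function. -/
def N (y : ℝ) : ℝ := ∫ z in Set.Iic y, phi z

/-- Black–Scholes auxiliary quantity `d₁`. -/
def d1 (t T x k σ : ℝ) : ℝ :=
  (x - k) / (σ * Real.sqrt (T - t)) + σ * Real.sqrt (T - t) / 2

/-- Black–Scholes auxiliary quantity `d₂`. -/
def d2 (t T x k σ : ℝ) : ℝ :=
  (x - k) / (σ * Real.sqrt (T - t)) - σ * Real.sqrt (T - t) / 2

/-- Black–Scholes call price with log-spot `x`, log-strike `k`,
time to maturity `T - t` and volatility `σ`. -/
def BS (t T x k σ : ℝ) : ℝ :=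
  Real.exp x * N (d1 t T x k σ) - Real.exp k * N (d2 t T x k σ)

/-- Inverse of the Black–Scholes price in the volatility argument on `(0, ∞)`. -/
def BSinv (t T x k l : ℝ) : ℝ := Function.invFunOn (BS t T x k) (Set.Ioi 0) l

/-!
The inverse price `g = BSinv t T x k` solves the autonomous equation `g' = F(g)`, where `F` is the
reciprocal of the vega `e^x φ(d₁) √τ` and `τ = T - t`. Since `∂d₁/∂σ = -d₂/σ`, the reciprocal vega
satisfies `F' = τ h F`, with `h σ = σ/4 - q²/σ³` and `q = (x - k)/τ`; the factor `τ` is what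
improves the order of all derivatives from the second on. By induction
`g⁽ⁿ⁺²⁾ = F(g)ⁿ⁺² · τ · Rₙ(g)`, where `Rₙ` is smooth jointly in `(q, τ, σ)` for `σ > 0`.
In the given regime `(q, τ, σ)` ranges over a compact set, so `Rₙ` is bounded,
while `F = O(τ^(-1/2))` because `d₁` is bounded there.
-/

open Set Filter Topology ProbabilityTheory MeasureTheory Function
open scoped ContDiff

/-! ### Inverse functions and autonomous equations -/

lemma hasDerivAt_invFunOn {f : ℝ → ℝ} {s : Set ℝ} {f' y : ℝ} (hf : StrictMonoOn f s)
    (hs : s ∈ 𝓝 (invFunOn f s y)) (hfs : f '' s ∈ 𝓝 y)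
    (hderiv : HasDerivAt f f' (invFunOn f s y)) (hf' : f' ≠ 0) :
    HasDerivAt (invFunOn f s) f'⁻¹ y := by
  have hmono : StrictMonoOn (invFunOn f s) (f '' s) := fun p hp q hq hpq => by
    rwa [← hf.lt_iff_lt (invFunOn_mem hp) (invFunOn_mem hq), invFunOn_eq hp, invFunOn_eq hq]
  have hcont : ContinuousAt (invFunOn f s) y :=
    hmono.continuousAt_of_image_mem_nhds hfs (by rwa [hf.injOn.invFunOn_image Subset.rfl])
  exact hderiv.of_local_left_inverse hcont hf' (eventually_of_mem hfs fun p hp => invFunOn_eq hp)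

/-- The coefficients `Rₙ` in `g⁽ⁿ⁺²⁾ = F(g)ⁿ⁺² · τ · Rₙ(g)` for a solution of `g' = F(g)` with
`F' = τ h F`. The factor `τ` is kept apart so that `Rₙ` stays bounded as `τ → 0`. -/
def derivCoeff (τ : ℝ) (h : ℝ → ℝ) : ℕ → ℝ → ℝ
  | 0 => h
  | n + 1 => fun z => deriv (derivCoeff τ h n) z + (n + 2) * τ * h z * derivCoeff τ h n z

section DerivCoeff

variable {E : Type*} [NormedAddCommGroup E] [NormedSpace ℝ E] {W : Set (E × ℝ)}

lemma contDiffOn_uncurry_deriv {f : E → ℝ → ℝ} (hW : IsOpen W)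
    (hf : ContDiffOn ℝ ∞ (uncurry f) W) :
    ContDiffOn ℝ ∞ (uncurry fun e => deriv (f e)) W := by
  intro p hp
  have hf_at : ContDiffAt ℝ ∞ (uncurry fun p : E × ℝ => f p.1) (p, p.2) :=
    (hf.contDiffAt (hW.mem_nhds hp)).comp (p, p.2) (f := fun r : (E × ℝ) × ℝ => (r.1.1, r.2))
      (by fun_prop)
  have hfderiv : ContDiffAt ℝ ∞ (fun p : E × ℝ => fderiv ℝ (f p.1) p.2) p :=
    hf_at.fderiv contDiffAt_snd (by simp)
  exact (hfderiv.clm_apply contDiffAt_const).contDiffWithinAt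

lemma contDiffOn_uncurry_derivCoeff {τ : E → ℝ} {h : E → ℝ → ℝ} (hW : IsOpen W)
    (hτ : ContDiff ℝ ∞ τ) (hh : ContDiffOn ℝ ∞ (uncurry h) W) (n : ℕ) :
    ContDiffOn ℝ ∞ (uncurry fun e => derivCoeff (τ e) (h e) n) W := by
  induction n with
  | zero => exact hh
  | succ n ih =>
    have hτ_fst : ContDiffOn ℝ ∞ (fun p : E × ℝ => (n + 2) * τ p.1) W := by fun_prop
    exact (contDiffOn_uncurry_deriv hW ih).add ((hτ_fst.mul hh).mul ih)

end DerivCoeff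

lemma differentiableOn_derivCoeff {h : ℝ → ℝ} {V : Set ℝ} (τ : ℝ) (hV : IsOpen V)
    (hh : ContDiffOn ℝ ∞ h V) (n : ℕ) : DifferentiableOn ℝ (derivCoeff τ h n) V := by
  have hsmooth : ContDiffOn ℝ ∞ (uncurry fun _ : ℝ => derivCoeff τ h n) (Prod.snd ⁻¹' V) :=
    contDiffOn_uncurry_derivCoeff (h := fun _ => h) (hV.preimage continuous_snd) contDiff_const
      (hh.comp contDiffOn_snd fun _ hp => hp) n
  exact (hsmooth.comp (contDiff_prodMk_right (0 : ℝ)).contDiffOn fun _ hz => hz).differentiableOn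
    (by simp)

lemma iteratedDeriv_add_two_of_autonomous {F g h : ℝ → ℝ} {τ : ℝ} {U V : Set ℝ} (hU : IsOpen U)
    (hV : IsOpen V) (hgV : MapsTo g U V) (hg : ∀ y ∈ U, HasDerivAt g (F (g y)) y)
    (hF : ∀ z ∈ V, HasDerivAt F (F z * (τ * h z)) z) (hh : ContDiffOn ℝ ∞ h V) (n : ℕ) :
    EqOn (iteratedDeriv (n + 2) g) (fun y => F (g y) ^ (n + 2) * τ * derivCoeff τ h n (g y)) U := by
  have deriv_eq_on {u v v' : ℝ → ℝ} (huv : EqOn u v U) (hv : ∀ y ∈ U, HasDerivAt v (v' y) y) :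
      EqOn (deriv u) v' U := fun y hy =>
    (huv.eventuallyEq_of_mem (hU.mem_nhds hy)).deriv_eq.trans (hv y hy).deriv
  have hFg (y : ℝ) (hy : y ∈ U) : HasDerivAt (fun y => F (g y)) _ y :=
    (hF _ (hgV hy)).comp y (hg y hy)
  induction n with
  | zero =>
    rw [iteratedDeriv_succ, iteratedDeriv_one]
    refine deriv_eq_on (fun y hy => (hg y hy).deriv) fun y hy => (hFg y hy).congr_deriv ?_
    simp only [derivCoeff]
    ring
  | succ n ih =>
    rw [iteratedDeriv_succ]
    refine deriv_eq_on ih fun y hy => ?_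
    have hR : HasDerivAt (fun y => derivCoeff τ h n (g y)) _ y :=
      (((differentiableOn_derivCoeff τ hV hh n).differentiableAt
        (hV.mem_nhds (hgV hy))).hasDerivAt).comp y (hg y hy)
    refine ((((hFg y hy).fun_pow (n + 2)).mul_const τ).fun_mul hR).congr_deriv ?_
    simp only [derivCoeff, Nat.add_succ_sub_one]
    push_cast
    ring

/-! ### The standard normal distribution -/

lemma phi_eq_gaussianPDFReal : phi = gaussianPDFReal 0 1 := by
  ext z
  simp [phi, gaussianPDFReal]

lemma phi_pos (z : ℝ) : 0 < phi z := by
  rw [phi_eq_gaussianPDFReal]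
  exact gaussianPDFReal_pos 0 1 z one_ne_zero

lemma hasDerivAt_phi (z : ℝ) : HasDerivAt phi (-z * phi z) z := by
  have hexp : HasDerivAt (fun z : ℝ => -z ^ 2 / 2) (-z) z :=
    (((hasDerivAt_pow 2 z).fun_neg).div_const 2).congr_deriv (by simp; ring)
  exact (hexp.exp.const_mul _).congr_deriv (by rw [phi]; ring)

lemma continuous_phi : Continuous phi :=
  continuous_iff_continuousAt.2 fun z => (hasDerivAt_phi z).continuousAt

lemma integrable_phi : Integrable phi := by
  rw [phi_eq_gaussianPDFReal]
  exact integrable_gaussianPDFReal 0 1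

lemma N_eq_cdf : N = cdf (gaussianReal 0 1) := by
  ext y
  rw [cdf_eq_real, measureReal_def, gaussianReal_apply_eq_integral 0 one_ne_zero,
    ENNReal.toReal_ofReal (integral_nonneg (gaussianPDFReal_nonneg 0 1)), N,
    phi_eq_gaussianPDFReal]

lemma tendsto_N_atTop : Tendsto N atTop (𝓝 1) := N_eq_cdf ▸ tendsto_cdf_atTop _

lemma tendsto_N_atBot : Tendsto N atBot (𝓝 0) := N_eq_cdf ▸ tendsto_cdf_atBot _

lemma hasDerivAt_N (y : ℝ) : HasDerivAt N (phi y) y := by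
  have hN (y : ℝ) : N y = N 0 + ∫ z in (0 : ℝ)..y, phi z := by
    rw [← intervalIntegral.integral_Iic_sub_Iic integrable_phi.integrableOn
      integrable_phi.integrableOn, N, N, add_sub_cancel]
  rw [funext hN]
  exact (intervalIntegral.integral_hasDerivAt_right (continuous_phi.intervalIntegrable _ _)
    (continuous_phi.stronglyMeasurableAtFilter _ _) continuous_phi.continuousAt).const_add _

lemma continuous_N : Continuous N :=
  continuous_iff_continuousAt.2 fun y => (hasDerivAt_N y).continuousAt

/-! ### The Black–Scholes price and its vega -/

section BlackScholes

variable {t T x k σ l : ℝ}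

/-- The vega `e^x φ(d₁) √(T - t)`, the derivative of the Black–Scholes price in the volatility. -/
def vega (t T x k σ : ℝ) : ℝ := Real.exp x * phi (d1 t T x k σ) * √(T - t)

/-- The open interval of arbitrage-free prices of a call with log-spot `x` and log-strike `k`. -/
def priceRange (x k : ℝ) : Set ℝ := Ioo (max (Real.exp x - Real.exp k) 0) (Real.exp x)

lemma vega_pos (hT : t < T) : 0 < vega t T x k σ :=
  mul_pos (mul_pos (Real.exp_pos x) (phi_pos _)) (Real.sqrt_pos.2 (sub_pos.2 hT))

lemma d1_sub_d2 : d1 t T x k σ - d2 t T x k σ = σ * √(T - t) := by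
  rw [d1, d2]
  ring

lemma d1_mul_d2 (hT : t < T) :
    d1 t T x k σ * d2 t T x k σ = (T - t) * (((x - k) / (T - t)) ^ 2 / σ ^ 2 - σ ^ 2 / 4) := by
  have hτ : 0 < T - t := sub_pos.2 hT
  calc d1 t T x k σ * d2 t T x k σ
      = (x - k) ^ 2 / (σ ^ 2 * √(T - t) ^ 2) - σ ^ 2 * √(T - t) ^ 2 / 4 := by
        rw [d1, d2]
        ring
    _ = _ := by
        rw [Real.sq_sqrt hτ.le]
        field_simp

lemma hasDerivAt_d1 (hσ : σ ≠ 0) : HasDerivAt (d1 t T x k) (-d2 t T x k σ / σ) σ := by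
  have hinv : HasDerivAt (fun σ => (x - k) / √(T - t) * σ⁻¹) _ σ :=
    (hasDerivAt_inv hσ).const_mul _
  have hlin : HasDerivAt (fun σ => σ * √(T - t) / 2) _ σ :=
    ((hasDerivAt_id σ).mul_const _).div_const 2
  refine ((hinv.add hlin).congr_deriv ?_).congr_of_eventuallyEq (.of_forall fun σ => ?_)
  · rw [d2]
    field_simp
    ring
  · simp only [d1, Pi.add_apply]
    ring

lemma hasDerivAt_d2 (hσ : σ ≠ 0) : HasDerivAt (d2 t T x k) (-d1 t T x k σ / σ) σ := by
  have hd2 : d2 t T x k = fun σ => d1 t T x k σ - σ * √(T - t) :=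
    funext fun σ => by rw [← d1_sub_d2 (t := t) (T := T) (x := x) (k := k), sub_sub_cancel]
  rw [hd2]
  refine ((hasDerivAt_d1 hσ).sub ((hasDerivAt_id σ).mul_const _)).congr_deriv ?_
  rw [d1, d2]
  field_simp
  ring

lemma exp_mul_phi_d2 (hT : t < T) (hσ : σ ≠ 0) :
    Real.exp k * phi (d2 t T x k σ) = Real.exp x * phi (d1 t T x k σ) := by
  have hs : √(T - t) ≠ 0 := (Real.sqrt_pos.2 (sub_pos.2 hT)).ne'
  rw [phi, phi, mul_left_comm, mul_left_comm (Real.exp x), ← Real.exp_add, ← Real.exp_add]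
  congr 2
  rw [d1, d2]
  field_simp
  ring

lemma hasDerivAt_BS (hT : t < T) (hσ : σ ≠ 0) :
    HasDerivAt (BS t T x k) (vega t T x k σ) σ := by
  have hN₁ := (hasDerivAt_N _).comp σ (hasDerivAt_d1 (t := t) (T := T) (x := x) (k := k) hσ)
  have hN₂ := (hasDerivAt_N _).comp σ (hasDerivAt_d2 (t := t) (T := T) (x := x) (k := k) hσ)
  refine ((hN₁.const_mul (Real.exp x)).sub (hN₂.const_mul (Real.exp k))).congr_deriv ?_
  calc _ = Real.exp x * phi (d1 t T x k σ) * ((d1 t T x k σ - d2 t T x k σ) / σ) := by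
        rw [← mul_assoc, ← mul_assoc, exp_mul_phi_d2 hT hσ]
        ring
    _ = vega t T x k σ := by
        rw [d1_sub_d2, mul_div_cancel_left₀ _ hσ, vega]

lemma strictMonoOn_BS (hT : t < T) : StrictMonoOn (BS t T x k) (Ioi 0) := by
  refine strictMonoOn_of_deriv_pos (convex_Ioi 0)
    (fun σ hσ => (hasDerivAt_BS hT (ne_of_gt hσ)).continuousAt.continuousWithinAt) fun σ hσ => ?_
  rw [interior_Ioi] at hσ
  rw [(hasDerivAt_BS hT (ne_of_gt hσ)).deriv]
  exact vega_pos hT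

/-! ### Range of the price -/

lemma tendsto_BS {L : Filter ℝ} {u v : ℝ} (h₁ : Tendsto (fun σ => N (d1 t T x k σ)) L (𝓝 u))
    (h₂ : Tendsto (fun σ => N (d2 t T x k σ)) L (𝓝 v)) :
    Tendsto (BS t T x k) L (𝓝 (Real.exp x * u - Real.exp k * v)) :=
  (h₁.const_mul _).sub (h₂.const_mul _)

lemma tendsto_BS_atTop (hT : t < T) : Tendsto (BS t T x k) atTop (𝓝 (Real.exp x)) := by
  have hv : Tendsto (fun σ => σ * √(T - t)) atTop atTop :=
    tendsto_id.atTop_mul_const (Real.sqrt_pos.2 (sub_pos.2 hT))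
  have hm : Tendsto (fun σ => (x - k) / (σ * √(T - t))) atTop (𝓝 0) :=
    tendsto_const_nhds.div_atTop hv
  have hd₁ : Tendsto (d1 t T x k) atTop atTop := hm.add_atTop (hv.atTop_div_const two_pos)
  have hd₂ : Tendsto (d2 t T x k) atTop atBot :=
    hm.add_atBot (tendsto_neg_atTop_atBot.comp (hv.atTop_div_const two_pos))
  simpa using tendsto_BS (tendsto_N_atTop.comp hd₁) (tendsto_N_atBot.comp hd₂)

lemma tendsto_mul_sqrt_div_two_nhdsGT_zero :
    Tendsto (fun σ => σ * √(T - t) / 2) (𝓝[>] 0) (𝓝 0) :=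
  (Continuous.tendsto' (by fun_prop) 0 0 (by simp)).mono_left nhdsWithin_le_nhds

lemma tendsto_inv_mul_sqrt_nhdsGT_zero (hT : t < T) :
    Tendsto (fun σ => (σ * √(T - t))⁻¹) (𝓝[>] 0) atTop := by
  simp only [mul_inv]
  exact tendsto_inv_nhdsGT_zero.atTop_mul_const (inv_pos.2 (Real.sqrt_pos.2 (sub_pos.2 hT)))

lemma tendsto_BS_nhdsGT_zero_of_lt (hT : t < T) (hxk : x < k) :
    Tendsto (BS t T x k) (𝓝[>] 0) (𝓝 0) := by
  have hm : Tendsto (fun σ => (x - k) / (σ * √(T - t))) (𝓝[>] 0) atBot :=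
    (tendsto_inv_mul_sqrt_nhdsGT_zero hT).const_mul_atTop_of_neg (sub_neg.2 hxk)
  have hd₁ : Tendsto (d1 t T x k) (𝓝[>] 0) atBot :=
    hm.atBot_add tendsto_mul_sqrt_div_two_nhdsGT_zero
  have hd₂ : Tendsto (d2 t T x k) (𝓝[>] 0) atBot :=
    hm.atBot_add tendsto_mul_sqrt_div_two_nhdsGT_zero.neg
  simpa using tendsto_BS (tendsto_N_atBot.comp hd₁) (tendsto_N_atBot.comp hd₂)

lemma tendsto_BS_nhdsGT_zero_of_gt (hT : t < T) (hkx : k < x) :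
    Tendsto (BS t T x k) (𝓝[>] 0) (𝓝 (Real.exp x - Real.exp k)) := by
  have hm : Tendsto (fun σ => (x - k) / (σ * √(T - t))) (𝓝[>] 0) atTop :=
    (tendsto_inv_mul_sqrt_nhdsGT_zero hT).const_mul_atTop (sub_pos.2 hkx)
  have hd₁ : Tendsto (d1 t T x k) (𝓝[>] 0) atTop :=
    hm.atTop_add tendsto_mul_sqrt_div_two_nhdsGT_zero
  have hd₂ : Tendsto (d2 t T x k) (𝓝[>] 0) atTop :=
    hm.atTop_add tendsto_mul_sqrt_div_two_nhdsGT_zero.neg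
  simpa using tendsto_BS (tendsto_N_atTop.comp hd₁) (tendsto_N_atTop.comp hd₂)

lemma tendsto_BS_self_nhdsGT_zero : Tendsto (BS t T x x) (𝓝[>] 0) (𝓝 0) := by
  have hcont : Continuous (BS t T x x) := by
    have := continuous_N
    unfold BS d1 d2
    simp only [sub_self, zero_div]
    fun_prop
  exact (hcont.tendsto' 0 0 (by simp [BS, d1, d2])).mono_left nhdsWithin_le_nhds

lemma tendsto_BS_nhdsGT_zero (hT : t < T) :
    Tendsto (BS t T x k) (𝓝[>] 0) (𝓝 (max (Real.exp x - Real.exp k) 0)) := by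
  rcases lt_trichotomy x k with hxk | rfl | hkx
  · rw [max_eq_right (sub_nonpos.2 (Real.exp_le_exp.2 hxk.le))]
    exact tendsto_BS_nhdsGT_zero_of_lt hT hxk
  · rw [sub_self, max_self]
    exact tendsto_BS_self_nhdsGT_zero
  · rw [max_eq_left (sub_nonneg.2 (Real.exp_le_exp.2 hkx.le))]
    exact tendsto_BS_nhdsGT_zero_of_gt hT hkx

lemma priceRange_subset_image_BS (hT : t < T) : priceRange x k ⊆ BS t T x k '' Ioi 0 :=
  isPreconnected_Ioi.intermediate_value_Ioo (l₁ := 𝓝[>] 0) inf_le_right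
    (le_principal_iff.2 (Ioi_mem_atTop 0))
    (fun _ hσ => (hasDerivAt_BS hT (ne_of_gt hσ)).continuousAt.continuousWithinAt)
    (tendsto_BS_nhdsGT_zero hT) (tendsto_BS_atTop hT)

/-! ### Derivatives of the inverse price -/

lemma BSinv_pos (hT : t < T) (hl : l ∈ priceRange x k) : 0 < BSinv t T x k l :=
  invFunOn_mem (priceRange_subset_image_BS hT hl)

lemma hasDerivAt_BSinv (hT : t < T) (hl : l ∈ priceRange x k) :
    HasDerivAt (BSinv t T x k) (vega t T x k (BSinv t T x k l))⁻¹ l :=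
  have hpos := BSinv_pos hT hl
  hasDerivAt_invFunOn (strictMonoOn_BS hT) (Ioi_mem_nhds hpos)
    (mem_of_superset (isOpen_Ioo.mem_nhds hl) (priceRange_subset_image_BS hT))
    (hasDerivAt_BS hT hpos.ne') (vega_pos hT).ne'

/-- The logarithmic derivative in `σ` of the reciprocal vega, divided by `T - t`, as a function of
the scaled log-moneyness `q = (x - k) / (T - t)`. -/
def invVegaRate (q σ : ℝ) : ℝ := σ / 4 - q ^ 2 / σ ^ 3

lemma hasDerivAt_inv_vega (hT : t < T) (hσ : σ ≠ 0) :
    HasDerivAt (fun σ => (vega t T x k σ)⁻¹)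
      ((vega t T x k σ)⁻¹ * ((T - t) * invVegaRate ((x - k) / (T - t)) σ)) σ := by
  have hvega : HasDerivAt (vega t T x k) (vega t T x k σ * (d1 t T x k σ * d2 t T x k σ / σ)) σ :=
    ((((hasDerivAt_phi _).comp σ (hasDerivAt_d1 hσ)).const_mul _).mul_const _).congr_deriv
      (by rw [vega]; ring)
  have hrate : d1 t T x k σ * d2 t T x k σ / σ
      = -((T - t) * invVegaRate ((x - k) / (T - t)) σ) := by
    rw [d1_mul_d2 hT, invVegaRate]
    field_simp
    ring
  have hv : vega t T x k σ ≠ 0 := (vega_pos hT).ne'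
  refine (hvega.fun_inv hv).congr_deriv ?_
  rw [hrate]
  field_simp

lemma contDiffOn_uncurry_invVegaRate :
    ContDiffOn ℝ ∞ (uncurry invVegaRate) {p | 0 < p.2} := by
  have hσ : ∀ p ∈ {p : ℝ × ℝ | 0 < p.2}, p.2 ^ 3 ≠ 0 := fun _ hp => (pow_pos hp 3).ne'
  exact (contDiffOn_snd.div_const 4).sub ((contDiffOn_fst.pow 2).div (contDiffOn_snd.pow 3) hσ)

lemma iteratedDeriv_add_two_BSinv (hT : t < T) (hl : l ∈ priceRange x k) (n : ℕ) :
    iteratedDeriv (n + 2) (BSinv t T x k) l =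
      (vega t T x k (BSinv t T x k l))⁻¹ ^ (n + 2) * (T - t) *
        derivCoeff (T - t) (invVegaRate ((x - k) / (T - t))) n (BSinv t T x k l) :=
  iteratedDeriv_add_two_of_autonomous (F := fun σ => (vega t T x k σ)⁻¹) isOpen_Ioo isOpen_Ioi
    (fun _ hp => BSinv_pos hT hp) (fun _ hp => hasDerivAt_BSinv hT hp)
    (fun _ hσ => hasDerivAt_inv_vega hT (ne_of_gt hσ))
    (contDiffOn_uncurry_invVegaRate.comp (contDiff_prodMk_right _).contDiffOn fun _ hσ => hσ) n hl

/-! ### Small-time bounds -/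

variable {a b c τ₀ x₀ : ℝ}

lemma exists_abs_derivCoeff_invVegaRate_le (ha : 0 < a) (b c τ₀ : ℝ) (n : ℕ) :
    ∃ M, ∀ q ∈ Icc (-c) c, ∀ τ ∈ Icc 0 τ₀, ∀ σ ∈ Icc a b,
      |derivCoeff τ (invVegaRate q) n σ| ≤ M := by
  have hopen : IsOpen {p : (ℝ × ℝ) × ℝ | 0 < p.2} := isOpen_lt continuous_const continuous_snd
  have hrate : ContDiffOn ℝ ∞ (uncurry fun e : ℝ × ℝ => invVegaRate e.1) {p | 0 < p.2} :=
    contDiffOn_uncurry_invVegaRate.comp (f := fun p : (ℝ × ℝ) × ℝ => (p.1.1, p.2))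
      (by fun_prop) fun _ hp => hp
  have hcont := (contDiffOn_uncurry_derivCoeff hopen contDiff_snd hrate n).continuousOn
  obtain ⟨M, hM⟩ := ((isCompact_Icc.prod isCompact_Icc).prod isCompact_Icc
    ).exists_bound_of_continuousOn (s := (Icc (-c) c ×ˢ Icc 0 τ₀) ×ˢ Icc a b)
      (hcont.mono fun p hp => ha.trans_le hp.2.1)
  exact ⟨M, fun q hq τ hτ σ hσ => hM ((q, τ), σ) ⟨⟨hq, hτ⟩, hσ⟩⟩

lemma abs_d1_le (ha : 0 < a) (hT : t < T) (hk : |x - k| ≤ c * (T - t)) (hσ : σ ∈ Icc a b) :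
    |d1 t T x k σ| ≤ √(T - t) * (c / a + b / 2) := by
  have hτ : 0 < T - t := sub_pos.2 hT
  have hs : 0 < √(T - t) := Real.sqrt_pos.2 hτ
  have hσ₀ : 0 < σ := ha.trans_le hσ.1
  have hmoneyness : |(x - k) / (σ * √(T - t))| ≤ √(T - t) * (c / a) :=
    calc |(x - k) / (σ * √(T - t))| = |x - k| / (σ * √(T - t)) := by
          rw [abs_div, abs_of_pos (mul_pos hσ₀ hs)]
      _ ≤ c * (T - t) / (a * √(T - t)) := by
          have := (abs_nonneg _).trans hk
          gcongr
          exact hσ.1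
      _ = c * √(T - t) ^ 2 / (a * √(T - t)) := by rw [Real.sq_sqrt hτ.le]
      _ = √(T - t) * (c / a) := by field_simp
  have hvol : |σ * √(T - t) / 2| ≤ √(T - t) * (b / 2) := by
    rw [abs_of_pos (by positivity), mul_div_right_comm, mul_comm]
    gcongr
    exact hσ.2
  rw [mul_add]
  exact (abs_add_le _ _).trans (add_le_add hmoneyness hvol)

lemma inv_vega_eq : (vega t T x k σ)⁻¹ =
    √(2 * Real.pi) * Real.exp (-x) * Real.exp (d1 t T x k σ ^ 2 / 2) *
      (√(T - t))⁻¹ := by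
  rw [vega, phi, neg_div, Real.exp_neg, Real.exp_neg]
  simp only [mul_inv, inv_inv]
  ring

lemma inv_vega_le (ha : 0 < a) (hT : t < T) (hτ₀ : T - t ≤ τ₀) (hx₀ : x₀ ≤ x)
    (hk : |x - k| ≤ c * (T - t)) (hσ : σ ∈ Icc a b) :
    (vega t T x k σ)⁻¹ ≤ √(2 * Real.pi) * Real.exp (-x₀) *
      Real.exp (τ₀ * (c / a + b / 2) ^ 2 / 2) * (√(T - t))⁻¹ := by
  have hd₁ : d1 t T x k σ ^ 2 ≤ τ₀ * (c / a + b / 2) ^ 2 :=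
    calc d1 t T x k σ ^ 2 ≤ (√(T - t) * (c / a + b / 2)) ^ 2 :=
          sq_le_sq' (abs_le.1 (abs_d1_le ha hT hk hσ)).1 (abs_le.1 (abs_d1_le ha hT hk hσ)).2
      _ = (T - t) * (c / a + b / 2) ^ 2 := by rw [mul_pow, Real.sq_sqrt (sub_pos.2 hT).le]
      _ ≤ τ₀ * (c / a + b / 2) ^ 2 := by gcongr
  rw [inv_vega_eq]
  gcongr

end BlackScholes

lemma inv_sqrt_pow_add_two_mul_self {τ : ℝ} (hτ : 0 < τ) (n : ℕ) :
    (√τ)⁻¹ ^ (n + 2) * τ = τ ^ (-((n : ℝ) / 2)) := by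
  have hsq : (√τ)⁻¹ ^ 2 * τ = 1 := by
    rw [inv_pow, Real.sq_sqrt hτ.le, inv_mul_cancel₀ hτ.ne']
  rw [pow_add, mul_assoc, hsq, mul_one, Real.rpow_neg hτ.le, Real.rpow_div_two_eq_sqrt _ hτ.le,
    Real.rpow_natCast, inv_pow]

lemma exists_abs_iteratedDeriv_add_two_BSinv_le {a : ℝ} (ha : 0 < a) (b c τ₀ x₀ : ℝ) (n : ℕ) :
    ∃ C > 0, ∀ t T x k l : ℝ, t < T → T - t ≤ τ₀ → x₀ ≤ x → |x - k| ≤ c * (T - t) →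
      l ∈ priceRange x k → BSinv t T x k l ∈ Icc a b →
        |iteratedDeriv (n + 2) (BSinv t T x k) l| ≤ C * (T - t) ^ (-((n : ℝ) / 2)) := by
  obtain ⟨M, hM⟩ := exists_abs_derivCoeff_invVegaRate_le ha b c τ₀ n
  set K : ℝ := √(2 * Real.pi) * Real.exp (-x₀) *
    Real.exp (τ₀ * (c / a + b / 2) ^ 2 / 2)
  refine ⟨K ^ (n + 2) * (|M| + 1), by positivity, fun t T x k l hT hτ₀ hx₀ hk hl hσ => ?_⟩
  have hτ : 0 < T - t := sub_pos.2 hT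
  have hq : (x - k) / (T - t) ∈ Icc (-c) c := by
    rwa [mem_Icc, ← abs_le, abs_div, abs_of_pos hτ, div_le_iff₀ hτ]
  have hR := (hM _ hq _ ⟨hτ.le, hτ₀⟩ _ hσ).trans ((le_abs_self M).trans (lt_add_one _).le)
  have hv : 0 ≤ (vega t T x k (BSinv t T x k l))⁻¹ := (inv_pos.2 (vega_pos hT)).le
  rw [iteratedDeriv_add_two_BSinv hT hl, abs_mul, abs_mul, abs_of_pos hτ,
    abs_of_nonneg (pow_nonneg hv _)]
  calc _ ≤ (K * (√(T - t))⁻¹) ^ (n + 2) * (T - t) * (|M| + 1) := by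
        gcongr
        exact inv_vega_le ha hT hτ₀ hx₀ hk hσ
    _ = K ^ (n + 2) * (|M| + 1) * ((√(T - t))⁻¹ ^ (n + 2) * (T - t)) := by ring
    _ = _ := by rw [inv_sqrt_pow_add_two_mul_self hτ]

theorem bsinv_higher_derivative_bounds_general {a : ℝ} (ha : 0 < a) (b c τ₀ x₀ : ℝ) (m : ℕ) :
    ∃ C > 0, ∀ t T x k l : ℝ, t < T → T - t ≤ τ₀ → x₀ ≤ x → |x - k| ≤ c * (T - t) →
      l ∈ priceRange x k → BSinv t T x k l ∈ Icc a b → ∀ n ∈ Icc 2 m,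
        |iteratedDeriv n (BSinv t T x k) l| ≤ C * (T - t) ^ (-(((n : ℝ) - 2) / 2)) := by
  choose C hC₀ hC using exists_abs_iteratedDeriv_add_two_BSinv_le ha b c τ₀ x₀
  refine ⟨∑ i ∈ Finset.range (m + 1), C i,
    Finset.sum_pos (fun i _ => hC₀ i) Finset.nonempty_range_add_one,
    fun t T x k l hT hτ₀ hx₀ hk hl hσ n ⟨h2n, hnm⟩ => ?_⟩
  obtain ⟨n, rfl⟩ := Nat.exists_eq_add_of_le' h2n
  have hle : C n ≤ ∑ i ∈ Finset.range (m + 1), C i :=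
    Finset.single_le_sum (fun i _ => (hC₀ i).le) (Finset.mem_range.2 (by lia))
  have hrpow : 0 ≤ (T - t) ^ (-((n : ℝ) / 2)) := Real.rpow_nonneg (sub_pos.2 hT).le _
  simpa using (hC n t T x k l hT hτ₀ hx₀ hk hl hσ).trans (mul_le_mul_of_nonneg_right hle hrpow)

theorem bsinv_higher_derivative_bounds (a b x : ℝ) (ha : 0 < a) (hab : a ≤ b) :
    ∃ C > 0, ∀ t T k l : ℝ, t < T → T - t ≤ 1 →
      |x - k| ≤ b ^ 2 * (T - t) / 2 →
      l ∈ Set.Ioo (max (Real.exp x - Real.exp k) 0) (Real.exp x) →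
      BSinv t T x k l ∈ Set.Icc a b →
      ∀ n ∈ ({4, 5, 6} : Set ℕ),
        |iteratedDeriv n (fun p => BSinv t T x k p) l| ≤
          C * (T - t) ^ (-(((n : ℝ) - 2) / 2)) := by
  obtain ⟨C, hC₀, hC⟩ := bsinv_higher_derivative_bounds_general ha b (b ^ 2 / 2) 1 x 6
  exact ⟨C, hC₀, fun t T k l hT hτ hk hl hσ n hn => hC t T x k l hT hτ le_rfl (by linarith) hl hσ n
    (by rcases hn with rfl | rfl | rfl <;> simp)⟩
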